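/- arXiv:1104.5428 — 8 statements merged into one kernel-verified Lean document; each statement's English description precedes it below -/
import Mathlib

section
/- Let A be an n×n complex matrix and B an n×m complex matrix, and let the subspaces S_k be defined as in the context. Then S_n = ℂⁿ if and only if for every nonzero complex scalar λ there is no nonzero vector w ∈ ℂⁿ with wᵀA = λwᵀ and wᵀB = 0 (i.e., the Popov–Belevitch–Hautus condition rank[A − λI, B] = n holds for all λ ≠ 0). -/
open Matrix

/-- The subspaces `S_k` of the paper: `S_0 = range B` and
`S_{k+1} = A⁻¹(S_k) + S_0`, where `A⁻¹` denotes the preimage. -/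
def ctrlS {F : Type*} [Field F] {n m : ℕ} (A : Matrix (Fin n) (Fin n) F)
    (B : Matrix (Fin n) (Fin m) F) : ℕ → Submodule F (Fin n → F)
  | 0 => LinearMap.range B.mulVecLin
  | k + 1 => Submodule.comap A.mulVecLin (ctrlS A B k) ⊔ LinearMap.range B.mulVecLin

theorem ctrlS_mono_succ {n m : ℕ} (A : Matrix (Fin n) (Fin n) ℂ) (B : Matrix (Fin n) (Fin m) ℂ)
    (k : ℕ) : ctrlS A B k ≤ ctrlS A B (k + 1) := by
  induction k with
  | zero => exact le_sup_right
  | succ k ih => exact sup_le_sup_right (Submodule.comap_mono ih) _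

theorem ctrlS_stab {n m : ℕ} (A : Matrix (Fin n) (Fin n) ℂ) (B : Matrix (Fin n) (Fin m) ℂ)
    (k : ℕ) : ctrlS A B k = ctrlS A B (k + 1) ∨ k ≤ Module.finrank ℂ (ctrlS A B k) := by
  induction k with
  | zero => right; exact Nat.zero_le _
  | succ k ih =>
    by_cases h : ctrlS A B k = ctrlS A B (k + 1)
    · left
      change _ = Submodule.comap A.mulVecLin (ctrlS A B (k+1)) ⊔ LinearMap.range B.mulVecLin
      rw [← h]
      exact h
    · right
      have h1 := ih.resolve_left h
      have h2 := Submodule.finrank_lt_finrank_of_lt (lt_of_le_of_ne (ctrlS_mono_succ A B k) h)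
      omega

/-- `S_n = ℂⁿ` iff the PBH condition holds for all nonzero `λ`. -/
theorem stmt_0 {n m : ℕ} (A : Matrix (Fin n) (Fin n) ℂ) (B : Matrix (Fin n) (Fin m) ℂ) :
    ctrlS A B n = ⊤ ↔
      ∀ lam : ℂ, lam ≠ 0 →
        ¬∃ w : Fin n → ℂ, w ≠ 0 ∧ w ᵥ* A = lam • w ∧ w ᵥ* B = 0 := by
  constructor
  · rintro htop lam hlam ⟨w, hw, hA, hB⟩
    have hR : ∀ v ∈ LinearMap.range B.mulVecLin, w ⬝ᵥ v = 0 := by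
      rintro _ ⟨u, rfl⟩
      rw [Matrix.mulVecLin_apply, Matrix.dotProduct_mulVec, hB, zero_dotProduct]
    have key : ∀ k, ∀ v ∈ ctrlS A B k, w ⬝ᵥ v = 0 := by
      intro k
      induction k with
      | zero => exact hR
      | succ k ih =>
        intro v hv
        obtain ⟨x, hx, y, hy, rfl⟩ := Submodule.mem_sup.1 hv
        have h1 := ih _ (Submodule.mem_comap.1 hx)
        rw [Matrix.mulVecLin_apply, Matrix.dotProduct_mulVec, hA, smul_dotProduct,
          smul_eq_mul] at h1
        rw [dotProduct_add, hR y hy, (mul_eq_zero.1 h1).resolve_left hlam, add_zero]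
    apply hw
    apply dotProduct_eq_zero
    intro v
    exact key n v (htop ▸ Submodule.mem_top)
  · intro h
    by_contra hne
    have hst : ctrlS A B n = ctrlS A B (n + 1) := by
      refine (ctrlS_stab A B n).resolve_right fun hle => hne ?_
      apply Submodule.eq_top_of_finrank_eq
      have := Submodule.finrank_le (ctrlS A B n)
      simp only [Module.finrank_fin_fun] at this ⊢
      omega
    change _ = Submodule.comap A.mulVecLin (ctrlS A B n) ⊔ LinearMap.range B.mulVecLin at hst
    generalize ctrlS A B n = V at hne hst
    have hcV : Submodule.comap A.mulVecLin V ≤ V := le_sup_left.trans hst.ge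
    have hRV : LinearMap.range B.mulVecLin ≤ V := le_sup_right.trans hst.ge
    have hker : LinearMap.ker (V.mkQ ∘ₗ A.mulVecLin) = Submodule.comap A.mulVecLin V := by
      rw [LinearMap.ker_comp, Submodule.ker_mkQ]
    have hEq : Submodule.comap A.mulVecLin V = V := by
      apply Submodule.eq_of_le_of_finrank_le hcV
      have h1 := LinearMap.finrank_range_add_finrank_ker (V.mkQ ∘ₗ A.mulVecLin)
      rw [hker] at h1
      have h2 := Submodule.finrank_le (LinearMap.range (V.mkQ ∘ₗ A.mulVecLin))
      have h3 := Submodule.finrank_quotient_add_finrank V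
      omega
    let f := V.mapQ V A.mulVecLin hEq.ge
    have hinj : Function.Injective f := by
      rw [← LinearMap.ker_eq_bot, Submodule.ker_mapQ, hEq, Submodule.mkQ_map_self]
    have hsurj : Function.Surjective f := LinearMap.injective_iff_surjective.1 hinj
    have : Nontrivial ((Fin n → ℂ) ⧸ V) := Submodule.Quotient.nontrivial_iff.2 hne
    have : Nontrivial (Module.Dual ℂ ((Fin n → ℂ) ⧸ V)) := inferInstance
    obtain ⟨lam, hlam⟩ := Module.End.exists_eigenvalue (K := ℂ)
      (V := Module.Dual ℂ ((Fin n → ℂ) ⧸ V)) f.dualMap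
    obtain ⟨φ, hφ⟩ := hlam.exists_hasEigenvector
    have hφ1 : ∀ q, φ (f q) = lam * φ q := fun q => by
      have := congrArg (fun g => g q) hφ.apply_eq_smul
      simpa using this
    have hl0 : lam ≠ 0 := by
      rintro rfl
      apply hφ.2
      apply LinearMap.ext
      intro q
      obtain ⟨p, rfl⟩ := hsurj q
      rw [hφ1, zero_mul]; rfl
    let w : Fin n → ℂ := fun i => φ (V.mkQ (Pi.single i 1))
    have hw : ∀ v, w ⬝ᵥ v = φ (V.mkQ v) := by
      intro v
      conv_rhs => rw [pi_eq_sum_univ' v]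
      simp only [map_sum, map_smul, dotProduct, w, smul_eq_mul]
      refine Finset.sum_congr rfl fun i _ => ?_
      rw [mul_comm]
    refine h lam hl0 ⟨w, ?_, ?_, ?_⟩
    · intro h0
      apply hφ.2
      apply LinearMap.ext
      intro q
      obtain ⟨v, rfl⟩ := V.mkQ_surjective q
      rw [← hw, h0, zero_dotProduct]; rfl
    · apply dotProduct_eq
      intro v
      rw [← Matrix.dotProduct_mulVec, smul_dotProduct, hw, hw, smul_eq_mul, ← hφ1]
      rfl
    · apply dotProduct_eq
      intro v
      rw [← Matrix.dotProduct_mulVec, zero_dotProduct, hw]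
      have : V.mkQ (B *ᵥ v) = 0 := by
        rw [Submodule.mkQ_apply, Submodule.Quotient.mk_eq_zero]
        exact hRV ⟨v, rfl⟩
      rw [this, map_zero]
end

section
/- Let A be an n×n complex matrix, B an n×m complex matrix, λ a nonzero complex scalar, and w ∈ ℂⁿ a vector with wᵀA = λwᵀ and wᵀB = 0. If wᵀv = 0 for every v ∈ S_k, then wᵀv = 0 for every v ∈ S_{k+1}. -/
open Matrix

/-- If `w` is a left eigenvector of `A` for a nonzero eigenvalue with `wᵀB = 0` and
`w ⊥ S_k`, then `w ⊥ S_{k+1}`. -/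
theorem stmt_1 {n m : ℕ} (A : Matrix (Fin n) (Fin n) ℂ) (B : Matrix (Fin n) (Fin m) ℂ)
    (lam : ℂ) (hlam : lam ≠ 0) (w : Fin n → ℂ)
    (hwA : w ᵥ* A = lam • w) (hwB : w ᵥ* B = 0) (k : ℕ)
    (hk : ∀ v ∈ ctrlS A B k, w ⬝ᵥ v = 0) :
    ∀ v ∈ ctrlS A B (k + 1), w ⬝ᵥ v = 0 := by
  intro v hv
  rw [ctrlS] at hv
  obtain ⟨x, hx, y, hy, rfl⟩ := Submodule.mem_sup.mp hv
  obtain ⟨u, rfl⟩ := hy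
  have h1 : w ⬝ᵥ (A *ᵥ x) = 0 := hk _ hx
  rw [dotProduct_mulVec, hwA, smul_dotProduct, smul_eq_mul] at h1
  have h2 : w ⬝ᵥ x = 0 := (mul_eq_zero.mp h1).resolve_left hlam
  rw [dotProduct_add, h2, mulVecLin_apply, dotProduct_mulVec, hwB, zero_dotProduct, add_zero]
end

section
/- Let A be an n×n complex matrix and B an n×m complex matrix. If S_n ≠ ℂⁿ, then there exist a nonzero complex scalar λ and a nonzero vector w ∈ ℂⁿ such that wᵀA = λwᵀ and wᵀB = 0. -/
open Matrix

theorem ctrlS_mono_aux {F : Type*} [Field F] {n m : ℕ} (A : Matrix (Fin n) (Fin n) F)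
    (B : Matrix (Fin n) (Fin m) F) (k : ℕ) : ctrlS A B k ≤ ctrlS A B (k + 1) := by
  induction k with
  | zero => exact le_sup_right
  | succ k ih => exact sup_le_sup_right (Submodule.comap_mono ih) _

theorem ctrlS_stab_aux {F : Type*} [Field F] {n m : ℕ} (A : Matrix (Fin n) (Fin n) F)
    (B : Matrix (Fin n) (Fin m) F) (k : ℕ) :
    ctrlS A B k = ctrlS A B (k + 1) ∨ k ≤ Module.finrank F (ctrlS A B k) := by
  induction k with
  | zero => exact Or.inr (Nat.zero_le _)
  | succ k ih =>
    by_cases hk : ctrlS A B k = ctrlS A B (k + 1)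
    · left
      change Submodule.comap A.mulVecLin (ctrlS A B k) ⊔ LinearMap.range B.mulVecLin =
        Submodule.comap A.mulVecLin (ctrlS A B (k + 1)) ⊔ LinearMap.range B.mulVecLin
      rw [← hk]
    · right
      have h1 := ih.resolve_left hk
      have h2 := Submodule.finrank_lt_finrank_of_lt
        (lt_of_le_of_ne (ctrlS_mono_aux A B k) hk)
      omega

theorem comap_eq_aux {F V : Type*} [Field F] [AddCommGroup V] [Module F V]
    [FiniteDimensional F V] (f : V →ₗ[F] V) (S : Submodule F V) (h : S.comap f ≤ S) :
    S.comap f = S := by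
  apply Submodule.eq_of_le_of_finrank_le h
  have hinj : Function.Injective ((S.comap f).mapQ S f le_rfl) := by
    rw [← LinearMap.ker_eq_bot, Submodule.ker_mapQ]
    exact Submodule.mkQ_map_self _
  have h1 := LinearMap.finrank_le_finrank_of_injective hinj
  have h2 := Submodule.finrank_quotient_add_finrank S
  have h3 := Submodule.finrank_quotient_add_finrank (S.comap f)
  omega

/-- If `S_n ≠ ℂⁿ` then there is a nonzero left eigenvector of `A` for a nonzero
eigenvalue that also annihilates `B`. -/
theorem stmt_6 {n m : ℕ} (A : Matrix (Fin n) (Fin n) ℂ) (B : Matrix (Fin n) (Fin m) ℂ)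
    (h : ctrlS A B n ≠ ⊤) :
    ∃ lam : ℂ, lam ≠ 0 ∧ ∃ w : Fin n → ℂ, w ≠ 0 ∧ w ᵥ* A = lam • w ∧ w ᵥ* B = 0 := by
  have hst : ctrlS A B n = ctrlS A B (n + 1) := by
    refine (ctrlS_stab_aux A B n).resolve_right fun hn => h ?_
    apply Submodule.eq_top_of_finrank_eq
    apply le_antisymm (Submodule.finrank_le _)
    simpa using hn
  have hle : Submodule.comap A.mulVecLin (ctrlS A B n) ≤ ctrlS A B n :=
    le_sup_left.trans (le_of_eq hst.symm)
  have hB : LinearMap.range B.mulVecLin ≤ ctrlS A B n :=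
    le_sup_right.trans (le_of_eq hst.symm)
  have heq := comap_eq_aux _ _ hle
  generalize ctrlS A B n = S at *
  let f : Module.End ℂ ((Fin n → ℂ) ⧸ S) := S.mapQ S A.mulVecLin heq.ge
  have hinj : Function.Injective f := by
    rw [← LinearMap.ker_eq_bot, Submodule.ker_mapQ, heq]
    exact Submodule.mkQ_map_self _
  have hsurj : Function.Surjective f := LinearMap.injective_iff_surjective.mp hinj
  have hnt : Nontrivial ((Fin n → ℂ) ⧸ S) := Submodule.Quotient.nontrivial_iff.mpr h
  let g : Module.End ℂ (Module.Dual ℂ ((Fin n → ℂ) ⧸ S)) := Module.Dual.transpose f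
  obtain ⟨lam, hlam⟩ := Module.End.exists_eigenvalue g
  obtain ⟨φ, hφ⟩ := hlam.exists_hasEigenvector
  have hφ1 : ∀ x, φ (f x) = lam * φ x := fun x =>
    LinearMap.congr_fun hφ.apply_eq_smul x
  have hφ0 : φ ≠ 0 := hφ.2
  have hw : ∀ x : Fin n → ℂ,
      (fun i => φ (S.mkQ (Pi.single i 1))) ⬝ᵥ x = φ (S.mkQ x) := by
    intro x
    conv_rhs => rw [pi_eq_sum_univ' x]
    simp only [map_sum, map_smul, dotProduct, smul_eq_mul]
    refine Finset.sum_congr rfl fun i _ => ?_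
    rw [mul_comm]
  refine ⟨lam, ?_, fun i => φ (S.mkQ (Pi.single i 1)), ?_, ?_, ?_⟩
  · rintro rfl
    apply hφ0
    refine LinearMap.ext fun q => ?_
    obtain ⟨y, hy⟩ := hsurj q
    have := hφ1 y
    rw [hy] at this
    simpa using this
  · intro h0
    apply hφ0
    refine LinearMap.ext fun q => ?_
    obtain ⟨x, rfl⟩ := S.mkQ_surjective q
    rw [← hw, h0]
    simp
  · refine dotProduct_eq _ _ fun x => ?_
    rw [← dotProduct_mulVec, smul_dotProduct, hw, hw]
    exact hφ1 (S.mkQ x)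
  · refine dotProduct_eq _ _ fun x => ?_
    rw [← dotProduct_mulVec, hw, zero_dotProduct]
    have : S.mkQ (B *ᵥ x) = 0 := by
      rw [Submodule.mkQ_apply, Submodule.Quotient.mk_eq_zero]
      exact hB ⟨x, rfl⟩
    rw [this, map_zero]
end

section
/- Consider the linear system with state space X = ℝⁿ, input space U = ℝᵐ, f(x) := Ax and μ(x,u) := x + Bu, where A is an n×n real matrix and B an n×m real matrix. Then for every x ∈ ℝⁿ and every k ≥ 0, the classes satisfy [x]_{-k} = x + S_k (the coset of the subspace S_k) and [x]_{-k}^- = x + A⁻¹(S_k). -/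
/-- The classes `[x]_{-k}` of the paper: `[x]_0 = μ(x,U)` and
`[x]_{-k-1} = μ([x]_{-k}^-, U)` where `[x]_{-k}^- = f⁻¹([f(x)]_{-k})`. -/
def cls {X U : Type*} (f : X → X) (μ : X → U → X) : ℕ → X → Set X
  | 0, x => Set.range (μ x)
  | k + 1, x => ⋃ y ∈ f ⁻¹' cls f μ k (f x), Set.range (μ y)

/-- The classes `[x]_{-k}^- = f⁻¹([f(x)]_{-k})` of the paper. -/
def clsm {X U : Type*} (f : X → X) (μ : X → U → X) (k : ℕ) (x : X) : Set X :=
  f ⁻¹' cls f μ k (f x)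

/-- The classes `[x]_j^-` for integer indices `j ≤ 1`: `[x]_1^- = {x}` and,
for `j ≤ 0`, `[x]_j^- = [x]_{-(-j)}^-`. -/
def clsI {X U : Type*} (f : X → X) (μ : X → U → X) (j : ℤ) (x : X) : Set X :=
  if j = 1 then {x} else clsm f μ (-j).toNat x

/-- The map `π(x̂,x) = max { j ∈ {2-p,…,0,1} : [x̂]_0 ∩ [x]_j^- ≠ ∅ }`. -/
noncomputable def piMap {X U : Type*} (f : X → X) (μ : X → U → X) (p : ℕ)
    (xhat x : X) : ℤ :=
  sSup {j : ℤ | 2 - (p : ℤ) ≤ j ∧ j ≤ 1 ∧ (cls f μ 0 xhat ∩ clsI f μ j x).Nonempty}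

open Matrix

theorem mem_cls_lin {n m : ℕ} (A : Matrix (Fin n) (Fin n) ℝ) (B : Matrix (Fin n) (Fin m) ℝ)
    (k : ℕ) : ∀ x y : Fin n → ℝ,
    y ∈ cls (fun y => A.mulVec y) (fun y u => y + B.mulVec u) k x ↔ y - x ∈ ctrlS A B k := by
  induction k with
  | zero =>
    intro x y
    simp only [cls, ctrlS, Set.mem_range, LinearMap.mem_range, Matrix.mulVecLin_apply]
    exact exists_congr fun u => by rw [eq_sub_iff_add_eq, add_comm]
  | succ k ih =>
    intro x y
    simp only [cls, ctrlS, Set.mem_iUnion, Set.mem_preimage, ih, Submodule.mem_sup,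
      Submodule.mem_comap, Matrix.mulVecLin_apply, LinearMap.mem_range, Set.mem_range]
    constructor
    · rintro ⟨z, hz, u, rfl⟩
      refine ⟨z - x, by rwa [Matrix.mulVec_sub], _, ⟨u, rfl⟩, by abel⟩
    · rintro ⟨z, hz, _, ⟨u, rfl⟩, h⟩
      refine ⟨x + z, by rwa [Matrix.mulVec_add, add_sub_cancel_left], u, ?_⟩
      rw [add_assoc, h]
      abel

/-- For the linear system `f(x) = Ax`, `μ(x,u) = x + Bu`, the classes satisfy
`[x]_{-k} = x + S_k` and `[x]_{-k}^- = x + A⁻¹(S_k)`. -/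
theorem stmt_8 {n m : ℕ} (A : Matrix (Fin n) (Fin n) ℝ) (B : Matrix (Fin n) (Fin m) ℝ)
    (x : Fin n → ℝ) (k : ℕ) :
    cls (fun y => A.mulVec y) (fun y u => y + B.mulVec u) k x =
        {y : Fin n → ℝ | ∃ s ∈ ctrlS A B k, y = x + s} ∧
      clsm (fun y => A.mulVec y) (fun y u => y + B.mulVec u) k x =
        {y : Fin n → ℝ | ∃ z : Fin n → ℝ, A.mulVec z ∈ ctrlS A B k ∧ y = x + z} := by
  constructor
  · ext y
    rw [mem_cls_lin]
    constructor
    · intro h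
      exact ⟨y - x, h, by abel⟩
    · rintro ⟨s, hs, rfl⟩
      rwa [add_sub_cancel_left]
  · ext y
    rw [clsm, Set.mem_preimage, mem_cls_lin, ← Matrix.mulVec_sub]
    constructor
    · intro h
      exact ⟨y - x, h, by abel⟩
    · rintro ⟨s, hs, rfl⟩
      rwa [add_sub_cancel_left]
end

section
/- Consider the linear system with state space X = ℝⁿ, input space U = ℝᵐ, f(x) := Ax and μ(x,u) := x + Bu, where A is an n×n real matrix and B an n×m real matrix. Then Assumption 1 holds (i.e., there exists p ≥ 1 such that [x]_{1-p} = ℝⁿ for all x ∈ ℝⁿ) if and only if S_n = ℝⁿ; moreover when S_n = ℝⁿ, Assumption 1 holds with p = n + 1. -/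
open Matrix

theorem ctrlS_le_succ {n m : ℕ} (A : Matrix (Fin n) (Fin n) ℝ) (B : Matrix (Fin n) (Fin m) ℝ)
    (k : ℕ) : ctrlS A B k ≤ ctrlS A B (k + 1) := by
  induction k with
  | zero => exact le_sup_right
  | succ k ih => exact sup_le_sup_right (Submodule.comap_mono ih) _

theorem ctrlS_stable {n m : ℕ} (A : Matrix (Fin n) (Fin n) ℝ) (B : Matrix (Fin n) (Fin m) ℝ)
    (k : ℕ) (h : ctrlS A B k = ctrlS A B (k + 1)) (j : ℕ) :
    ctrlS A B (k + j) = ctrlS A B k := by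
  induction j with
  | zero => rfl
  | succ j ih =>
    rw [h]
    change Submodule.comap A.mulVecLin (ctrlS A B (k + j)) ⊔ _ = _
    rw [ih]
    rfl

theorem ctrlS_dim {n m : ℕ} (A : Matrix (Fin n) (Fin n) ℝ) (B : Matrix (Fin n) (Fin m) ℝ)
    (k : ℕ) : k ≤ Module.finrank ℝ (ctrlS A B k) ∨ ctrlS A B k = ctrlS A B (k + 1) := by
  induction k with
  | zero => exact Or.inl (Nat.zero_le _)
  | succ k ih =>
    by_cases h : ctrlS A B k = ctrlS A B (k + 1)
    · right
      have h2 := ctrlS_stable A B k h 2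
      exact h.symm.trans h2.symm
    · left
      have h1 := ih.resolve_right h
      have := Submodule.finrank_lt_finrank_of_lt (lt_of_le_of_ne (ctrlS_le_succ A B k) h)
      omega

theorem ctrlS_le_n {n m : ℕ} (A : Matrix (Fin n) (Fin n) ℝ) (B : Matrix (Fin n) (Fin m) ℝ)
    (k : ℕ) : ctrlS A B k ≤ ctrlS A B n := by
  rcases ctrlS_dim A B n with h | h
  · have : ctrlS A B n = ⊤ := by
      apply Submodule.eq_top_of_finrank_eq
      have := Submodule.finrank_le (ctrlS A B n)
      simp at this ⊢
      omega
    rw [this]; exact le_top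
  · rw [← ctrlS_stable A B n h k]
    exact monotone_nat_of_le_succ (ctrlS_le_succ A B) (by omega)

theorem mem_cls_iff {n m : ℕ} (A : Matrix (Fin n) (Fin n) ℝ) (B : Matrix (Fin n) (Fin m) ℝ)
    (k : ℕ) (x z : Fin n → ℝ) :
    z ∈ cls (fun y => A.mulVec y) (fun y u => y + B.mulVec u) k x ↔ z - x ∈ ctrlS A B k := by
  induction k generalizing x z with
  | zero =>
    simp only [cls, ctrlS, Set.mem_range, LinearMap.mem_range, Matrix.mulVecLin_apply]
    exact exists_congr fun u => by rw [eq_sub_iff_add_eq, add_comm]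
  | succ k ih =>
    simp only [cls, ctrlS, Set.mem_iUnion, Set.mem_preimage, ih, Submodule.mem_sup,
      Submodule.mem_comap, Set.mem_range, LinearMap.mem_range, Matrix.mulVecLin_apply]
    constructor
    · rintro ⟨y, hy, u, rfl⟩
      refine ⟨y - x, by rwa [Matrix.mulVec_sub], _, ⟨u, rfl⟩, by abel⟩
    · rintro ⟨w, hw, _, ⟨u, rfl⟩, h⟩
      refine ⟨w + x, by rw [← Matrix.mulVec_sub]; simpa using hw, u, ?_⟩
      rw [eq_sub_iff_add_eq] at h
      rw [← h]; abel

theorem cls_univ_iff {n m : ℕ} (A : Matrix (Fin n) (Fin n) ℝ) (B : Matrix (Fin n) (Fin m) ℝ)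
    (k : ℕ) : (∀ x : Fin n → ℝ,
      cls (fun y => A.mulVec y) (fun y u => y + B.mulVec u) k x = Set.univ) ↔
      ctrlS A B k = ⊤ := by
  constructor
  · intro h
    rw [eq_top_iff]
    intro z _
    have := (mem_cls_iff A B k 0 z).1 (by rw [h 0]; trivial)
    simpa using this
  · intro h x
    ext z
    rw [mem_cls_iff, h]
    simp

/-- For the linear system `f(x) = Ax`, `μ(x,u) = x + Bu`, Assumption 1
(there is `p ≥ 1` with `[x]_{1-p} = ℝⁿ` for all `x`) holds iff `S_n = ℝⁿ`;
moreover when `S_n = ℝⁿ` Assumption 1 holds with `p = n + 1`. -/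
theorem stmt_9 {n m : ℕ} (A : Matrix (Fin n) (Fin n) ℝ) (B : Matrix (Fin n) (Fin m) ℝ) :
    ((∃ p : ℕ, 1 ≤ p ∧ ∀ x : Fin n → ℝ,
        cls (fun y => A.mulVec y) (fun y u => y + B.mulVec u) (p - 1) x = Set.univ) ↔
      ctrlS A B n = ⊤) ∧
    (ctrlS A B n = ⊤ → ∀ x : Fin n → ℝ,
        cls (fun y => A.mulVec y) (fun y u => y + B.mulVec u) ((n + 1) - 1) x = Set.univ) := by
  refine ⟨⟨?_, fun h => ⟨n + 1, by omega, (cls_univ_iff A B n).2 h⟩⟩,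
    fun h => (cls_univ_iff A B n).2 h⟩
  rintro ⟨p, -, hp⟩
  rw [cls_univ_iff] at hp
  exact top_le_iff.1 (hp ▸ ctrlS_le_n A B (p - 1))
end

section
/- Let A be an n×n real matrix and B ∈ ℝⁿ (an n×1 matrix) with n ≥ 2, and suppose (A,B) is a controllable pair, i.e., rank[B, AB, …, A^{n−1}B] = n. Fix x₀ ∈ ℝⁿ, set x(k) := A^k x₀, and let x̂ : ℕ → ℝⁿ be any sequence satisfying x̂(k+1) ∈ {Av : v ∈ (x̂(k) + S_0) ∩ (x(k) + A⁻¹(S_{n−2}))} for all k ∈ ℕ (these intersections are nonempty for every pair of points). Then x̂(k) = x(k) for all k ≥ n. -/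
open Matrix

theorem mem_range_col {n : ℕ} (B : Matrix (Fin n) (Fin 1) ℝ) (s : Fin n → ℝ)
    (hs : s ∈ LinearMap.range B.mulVecLin) : ∃ c : ℝ, s = c • (fun i => B i 0) := by
  obtain ⟨w, rfl⟩ := hs
  refine ⟨w 0, ?_⟩
  ext i
  simp [Matrix.mulVec, dotProduct, mul_comm]

theorem ctrlS_pow_mem {n : ℕ} (A : Matrix (Fin n) (Fin n) ℝ) (B : Matrix (Fin n) (Fin 1) ℝ)
    (k : ℕ) : ∀ v ∈ ctrlS A B k, (A ^ k).mulVec v ∈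
      Submodule.span ℝ ((fun j : ℕ => (A ^ j).mulVec (fun i => B i 0)) '' Set.Iic k) := by
  induction k with
  | zero =>
    intro v hv
    obtain ⟨c, rfl⟩ := mem_range_col B v hv
    rw [Matrix.mulVec_smul]
    exact Submodule.smul_mem _ _ (Submodule.subset_span ⟨0, by simp, rfl⟩)
  | succ k ih =>
    intro v hv
    obtain ⟨w, hw, s, hs, rfl⟩ := Submodule.mem_sup.1 hv
    obtain ⟨c, rfl⟩ := mem_range_col B s hs
    rw [Matrix.mulVec_add, Matrix.mulVec_smul]
    refine Submodule.add_mem _ ?_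
      (Submodule.smul_mem _ _ (Submodule.subset_span ⟨k + 1, by simp, rfl⟩))
    have h := ih _ hw
    rw [Matrix.mulVecLin_apply, Matrix.mulVec_mulVec, ← pow_succ] at h
    refine Submodule.span_mono (Set.image_mono ?_) h
    exact Set.Iic_subset_Iic.2 (Nat.le_succ k)

theorem ctrlS_mono {n : ℕ} (A : Matrix (Fin n) (Fin n) ℝ) (B : Matrix (Fin n) (Fin 1) ℝ) :
    Monotone (ctrlS A B) := by
  refine monotone_nat_of_le_succ fun k => ?_
  induction k with
  | zero => exact le_sup_right
  | succ k ih => exact sup_le_sup_right (Submodule.comap_mono ih) _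

theorem key_zero {n : ℕ} (hn : 2 ≤ n) (A : Matrix (Fin n) (Fin n) ℝ)
    (B : Matrix (Fin n) (Fin 1) ℝ)
    (hctrb : (Matrix.of fun (i : Fin n) (j : Fin n) => ((A ^ (j : ℕ)) * B) i 0).rank = n)
    (s : Fin n → ℝ) (hs : s ∈ ctrlS A B 0) (hA : A.mulVec s ∈ ctrlS A B (n - 2)) : s = 0 := by
  obtain ⟨c, rfl⟩ := mem_range_col B s hs
  by_cases hc : c = 0
  · simp [hc]
  exfalso
  have hli : LinearIndependent ℝ (fun j : Fin n => (A ^ (j : ℕ)).mulVec (fun i => B i 0)) := by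
    rw [linearIndependent_iff_card_eq_finrank_span]
    rw [Matrix.rank_eq_finrank_span_cols] at hctrb
    rw [Fintype.card_fin]
    exact hctrb.symm
  rw [Matrix.mulVec_smul, Submodule.smul_mem_iff _ hc] at hA
  have h := ctrlS_pow_mem A B _ _ hA
  rw [Matrix.mulVec_mulVec, ← pow_succ] at h
  have hlast : (⟨n - 2 + 1, by omega⟩ : Fin n) ∉ {j : Fin n | (j : ℕ) ≤ n - 2} := by simp
  refine hli.notMem_span_image hlast (Submodule.span_mono ?_ h)
  rintro _ ⟨j, hj, rfl⟩
  have hj' : j ≤ n - 2 := hj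
  exact ⟨⟨j, by omega⟩, hj', rfl⟩

/-- Deadbeat tracking (Corollary 1): if `(A,B)` is a controllable pair with scalar
input, any solution `x̂` of the tracker
`x̂⁺ ∈ A((x̂ + S_0) ∩ (x + A⁻¹(S_{n-2})))` tracking `x(k) = Aᵏx₀` satisfies
`x̂(k) = x(k)` for all `k ≥ n`. -/
theorem stmt_17 {n : ℕ} (hn : 2 ≤ n) (A : Matrix (Fin n) (Fin n) ℝ)
    (B : Matrix (Fin n) (Fin 1) ℝ)
    (hctrb : (Matrix.of fun (i : Fin n) (j : Fin n) => ((A ^ (j : ℕ)) * B) i 0).rank = n)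
    (x₀ : Fin n → ℝ) (xhat : ℕ → Fin n → ℝ)
    (hxhat : ∀ k : ℕ, ∃ v : Fin n → ℝ,
      (∃ s ∈ ctrlS A B 0, v = xhat k + s) ∧
      (∃ z : Fin n → ℝ, A.mulVec z ∈ ctrlS A B (n - 2) ∧ v = (A ^ k).mulVec x₀ + z) ∧
      xhat (k + 1) = A.mulVec v) :
    ∀ k : ℕ, n ≤ k → xhat k = (A ^ k).mulVec x₀ := by
  have step : ∀ k, ∃ s ∈ ctrlS A B 0,
      A.mulVec (xhat k - (A ^ k).mulVec x₀ + s) ∈ ctrlS A B (n - 2) ∧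
      xhat (k + 1) - (A ^ (k + 1)).mulVec x₀ = A.mulVec (xhat k - (A ^ k).mulVec x₀ + s) := by
    intro k
    obtain ⟨v, ⟨s, hs, hv⟩, ⟨z, hz, hv'⟩, hx⟩ := hxhat k
    have hzz : z = xhat k - (A ^ k).mulVec x₀ + s := by
      have : z = v - (A ^ k).mulVec x₀ := by rw [hv']; abel
      rw [this, hv]; abel
    refine ⟨s, hs, hzz ▸ hz, ?_⟩
    rw [← hzz, hx, hv', Matrix.mulVec_add, Matrix.mulVec_mulVec, ← pow_succ']
    abel
  generalize he : (fun k => xhat k - (A ^ k).mulVec x₀) = e at *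
  have he' : ∀ k, xhat k - (A ^ k).mulVec x₀ = e k := fun k => congrFun he k
  simp only [he'] at step
  have h0 : ∀ k, e k ∈ ctrlS A B 0 → e (k + 1) = 0 := by
    intro k hk
    obtain ⟨s, hs, h1, h2⟩ := step k
    rw [h2, key_zero hn A B hctrb _ (Submodule.add_mem _ hk hs) h1, Matrix.mulVec_zero]
  have hS : ∀ k j, j + 1 ≤ n - 2 → e k ∈ ctrlS A B (j + 1) → e (k + 1) ∈ ctrlS A B j := by
    intro k j hj hk
    obtain ⟨s, hs, h1, h2⟩ := step k
    obtain ⟨w, hw, t, ht, hwt⟩ := Submodule.mem_sup.1 hk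
    have hw' : A.mulVec w ∈ ctrlS A B j := hw
    have hz : t + s = 0 := by
      refine key_zero hn A B hctrb _ (Submodule.add_mem _ ht hs) ?_
      have : t + s = (e k + s) - w := by rw [← hwt]; abel
      rw [this, Matrix.mulVec_sub]
      exact Submodule.sub_mem _ h1 (ctrlS_mono A B (by omega) hw')
    rw [h2, ← hwt, add_assoc, hz, add_zero]
    exact hw'
  have hd : ∀ i, i ≤ n - 2 → e (i + 1) ∈ ctrlS A B (n - 2 - i) := by
    intro i
    induction i with
    | zero =>
      intro _
      obtain ⟨s, hs, h1, h2⟩ := step 0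
      rw [h2]; exact h1
    | succ i ih =>
      intro hi
      refine hS _ _ (by omega) ?_
      have := ih (by omega)
      rwa [show n - 2 - (i + 1) + 1 = n - 2 - i by omega]
  intro k hk
  have hek : e k = 0 := by
    induction k, hk using Nat.le_induction with
    | base =>
      have h := hd (n - 2) le_rfl
      rw [Nat.sub_self] at h
      have := h0 _ h
      rwa [show n - 2 + 1 + 1 = n by omega] at this
    | succ k hk ih =>
      exact h0 k (by rw [ih]; exact Submodule.zero_mem _)
  exact sub_eq_zero.1 ((he' k).trans hek)
end

section
/- Let A be an n×n real matrix and B ∈ ℝⁿ (an n×1 matrix) with n ≥ 2, and suppose (A,B) is a controllable pair, i.e., rank[B, AB, …, A^{n−1}B] = n. Then S_{n−1} = ℝⁿ; equivalently, S_0 + A⁻¹(S_{n−2}) = ℝⁿ, so that for all x, x̂ ∈ ℝⁿ the intersection (x̂ + S_0) ∩ (x + A⁻¹(S_{n−2})) is nonempty. -/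
open Matrix

/-- The vector `B` seen as an element of the range of `B`. -/
theorem col_mem_range {n : ℕ} (B : Matrix (Fin n) (Fin 1) ℝ) (c : ℝ) :
    c • (fun i => B i 0) ∈ LinearMap.range B.mulVecLin := by
  refine ⟨fun _ => c, ?_⟩
  ext i
  simp [Matrix.mulVec, dotProduct, mul_comm]

/-- If `A^k v` is a combination of `B, …, A^k B`, then `v ∈ S_k`. -/
theorem mem_ctrlS_of_pow {n : ℕ} (A : Matrix (Fin n) (Fin n) ℝ)
    (B : Matrix (Fin n) (Fin 1) ℝ) (u : ℕ → ℝ) (k : ℕ) : ∀ v : Fin n → ℝ,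
    (A ^ k) *ᵥ v = ∑ j ∈ Finset.range (k + 1), u j • ((A ^ j) *ᵥ (fun i => B i 0)) →
    v ∈ ctrlS A B k := by
  induction k with
  | zero =>
    intro v hv
    simp at hv
    rw [hv]
    exact col_mem_range B _
  | succ k ih =>
    intro v hv
    have h1 : A *ᵥ (v - u (k + 1) • (fun i => B i 0)) ∈ ctrlS A B k := by
      apply ih
      rw [Matrix.mulVec_mulVec, ← pow_succ, Matrix.mulVec_sub, hv, Finset.sum_range_succ,
        Matrix.mulVec_smul, add_sub_cancel_right]
    have h2 : v = (v - u (k + 1) • (fun i => B i 0)) + u (k + 1) • (fun i => B i 0) := by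
      simp
    rw [h2]
    exact Submodule.add_mem_sup h1 (col_mem_range B _)

/-- If `(A,B)` is a controllable pair with scalar input and `n ≥ 2`, then
`S_{n-1} = ℝⁿ`; equivalently `S_0 + A⁻¹(S_{n-2}) = ℝⁿ`, so for all `x, x̂` the
intersection `(x̂ + S_0) ∩ (x + A⁻¹(S_{n-2}))` is nonempty. -/
theorem stmt_18 {n : ℕ} (hn : 2 ≤ n) (A : Matrix (Fin n) (Fin n) ℝ)
    (B : Matrix (Fin n) (Fin 1) ℝ)
    (hctrb : (Matrix.of fun (i : Fin n) (j : Fin n) => ((A ^ (j : ℕ)) * B) i 0).rank = n) :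
    ctrlS A B (n - 1) = ⊤ ∧
      Submodule.comap A.mulVecLin (ctrlS A B (n - 2)) ⊔ ctrlS A B 0 = ⊤ ∧
      ∀ x xhat : Fin n → ℝ,
        ({y : Fin n → ℝ | ∃ s ∈ ctrlS A B 0, y = xhat + s} ∩
          {y : Fin n → ℝ | ∃ z : Fin n → ℝ, A.mulVec z ∈ ctrlS A B (n - 2) ∧
            y = x + z}).Nonempty := by
  have htop : ctrlS A B (n - 1) = ⊤ := by
    rw [eq_top_iff]
    intro v _
    have hr := Submodule.eq_top_of_finrank_eq (hctrb.trans (Module.finrank_fin_fun ℝ).symm)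
    obtain ⟨w, hw⟩ := LinearMap.range_eq_top.1 hr ((A ^ (n - 1)) *ᵥ v)
    apply mem_ctrlS_of_pow A B (fun j => if h : j < n then w ⟨j, h⟩ else 0)
    rw [← hw, Nat.sub_add_cancel (by omega), Finset.sum_range]
    ext i
    simp [Matrix.mulVec, dotProduct, Matrix.mul_apply, mul_comm]
  have h2 : Submodule.comap A.mulVecLin (ctrlS A B (n - 2)) ⊔ ctrlS A B 0 = ⊤ := by
    have e : n - 1 = (n - 2) + 1 := by omega
    rw [e] at htop
    exact htop
  refine ⟨htop, h2, fun x xhat => ?_⟩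
  have hm : xhat - x ∈ Submodule.comap A.mulVecLin (ctrlS A B (n - 2)) ⊔ ctrlS A B 0 := by
    rw [h2]; trivial
  obtain ⟨z, hz, s, hs, hzs⟩ := Submodule.mem_sup.1 hm
  refine ⟨x + z, ⟨-s, Submodule.neg_mem _ hs, ?_⟩, z, hz, rfl⟩
  have : xhat = x + (z + s) := by rw [hzs]; abel
  rw [this]; abel
end

section
/- Let A be an invertible n×n real matrix and B ∈ ℝⁿ (an n×1 matrix) with n ≥ 2, and suppose (A,B) is a controllable pair, i.e., rank[B, AB, …, A^{n−1}B] = n. Let w ∈ ℝⁿ be a nonzero vector orthogonal to the subspace A⁻¹(S_{n−2}), i.e., wᵀv = 0 for all v ∈ A⁻¹(S_{n−2}). Then wᵀB ≠ 0, and setting K₂ := (wᵀB)⁻¹ wᵀ (a 1×n matrix), the matrix A(I − BK₂) is nilpotent ((A(I − BK₂))ⁿ = 0); consequently K := K₂A is a deadbeat gain for x⁺ = Ax + Bu, i.e., A − BK is nilpotent. -/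
open Matrix

theorem ctrl_pow_mem {n : ℕ} (A X : Matrix (Fin n) (Fin n) ℝ) (hAX : A * X = 1)
    (B : Matrix (Fin n) (Fin 1) ℝ) (k : ℕ) :
    ∀ j ≤ k, (X ^ j) *ᵥ (fun i => B i 0) ∈ ctrlS A B k := by
  have hb : (fun i => B i 0) ∈ LinearMap.range B.mulVecLin := by
    refine ⟨fun _ => 1, ?_⟩
    ext i
    simp [Matrix.mulVec, dotProduct]
  induction k with
  | zero =>
    intro j hj
    obtain rfl : j = 0 := by omega
    simpa [ctrlS] using hb
  | succ k ih =>
    intro j hj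
    cases j with
    | zero =>
      rw [pow_zero, Matrix.one_mulVec]
      exact Submodule.mem_sup_right hb
    | succ j =>
      refine Submodule.mem_sup_left ?_
      rw [Submodule.mem_comap, Matrix.mulVecLin_apply, Matrix.mulVec_mulVec, pow_succ',
        ← mul_assoc, hAX, one_mul]
      exact ih j (by omega)

theorem ctrl_ext {n : ℕ} (A X : Matrix (Fin n) (Fin n) ℝ) (hAX : A * X = 1)
    (B : Matrix (Fin n) (Fin 1) ℝ)
    (hctrb : (Matrix.of fun (i : Fin n) (j : Fin n) => ((A ^ (j : ℕ)) * B) i 0).rank = n)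
    (N : Matrix (Fin n) (Fin n) ℝ)
    (hN : ∀ j < n, N *ᵥ ((X ^ j) *ᵥ (fun i => B i 0)) = 0) : N = 0 := by
  have hXA : X * A = 1 := mul_eq_one_comm.mp hAX
  have hc : Commute X A := by rw [Commute, SemiconjBy, hXA, hAX]
  set C := (Matrix.of fun (i : Fin n) (j : Fin n) => ((A ^ (j : ℕ)) * B) i 0) with hC
  have hCu : IsUnit C := by
    rw [← Matrix.linearIndependent_cols_iff_isUnit, linearIndependent_iff_card_eq_finrank_span,
      Set.finrank, ← Matrix.rank_eq_finrank_span_cols, hctrb, Fintype.card_fin]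
  have hcol : ∀ j : Fin n, (fun i => C i j) = (A ^ (j : ℕ)) *ᵥ (fun i => B i 0) := by
    intro j
    ext i
    simp [hC, Matrix.mul_apply, Matrix.mulVec, dotProduct]
  have h0 : (N * X ^ (n - 1)) * C = 0 := by
    ext i j
    have h1 : ((N * X ^ (n - 1)) * C) i j = ((N * X ^ (n - 1)) *ᵥ (fun i => C i j)) i := rfl
    have h2 : X ^ (n - 1) * A ^ (j : ℕ) = X ^ (n - 1 - (j : ℕ)) := by
      have : n - 1 = (n - 1 - (j : ℕ)) + (j : ℕ) := by omega
      conv_lhs => rw [this]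
      rw [pow_add, mul_assoc, ← hc.mul_pow, hXA, one_pow, mul_one]
    rw [h1, hcol, Matrix.mulVec_mulVec, mul_assoc, h2, ← Matrix.mulVec_mulVec,
      hN _ (by omega)]
    rfl
  have h3 : N * X ^ (n - 1) = 0 := by
    have := hCu.mul_left_eq_zero.mp h0
    exact this
  calc N = N * (X ^ (n - 1) * A ^ (n - 1)) := by rw [← hc.mul_pow, hXA, one_pow, mul_one]
    _ = 0 := by rw [← mul_assoc, h3, zero_mul]

/-- Correctness of the deadbeat gain algorithm: for an invertible `A` and a
controllable pair `(A,B)` with scalar input, if the nonzero vector `w` is orthogonal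
to `A⁻¹(S_{n-2})` then `wᵀB ≠ 0`, and `K₂ := (wᵀB)⁻¹wᵀ` makes `A(I - BK₂)` nilpotent;
consequently `K := K₂A` is a deadbeat gain, i.e. `A - BK` is nilpotent. -/
theorem stmt_19 {n : ℕ} (hn : 2 ≤ n) (A : Matrix (Fin n) (Fin n) ℝ) (hA : IsUnit A)
    (B : Matrix (Fin n) (Fin 1) ℝ)
    (hctrb : (Matrix.of fun (i : Fin n) (j : Fin n) => ((A ^ (j : ℕ)) * B) i 0).rank = n)
    (w : Fin n → ℝ) (hw : w ≠ 0)
    (hperp : ∀ v : Fin n → ℝ, A.mulVec v ∈ ctrlS A B (n - 2) → w ⬝ᵥ v = 0) :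
    w ⬝ᵥ (fun i => B i 0) ≠ 0 ∧
      (A * (1 - B * Matrix.of fun (_ : Fin 1) (j : Fin n) =>
        (w ⬝ᵥ fun i => B i 0)⁻¹ * w j)) ^ n = 0 ∧
      (A - B * ((Matrix.of fun (_ : Fin 1) (j : Fin n) =>
        (w ⬝ᵥ fun i => B i 0)⁻¹ * w j) * A)) ^ n = 0 := by
  obtain ⟨X, hAX⟩ : ∃ X, A * X = 1 := hA.exists_right_inv
  have hXA : X * A = 1 := mul_eq_one_comm.mp hAX
  have hperp' : ∀ j, j + 1 < n → w ⬝ᵥ ((X ^ (j + 1)) *ᵥ (fun i => B i 0)) = 0 := by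
    intro j hj
    apply hperp
    rw [Matrix.mulVec_mulVec, pow_succ', ← mul_assoc, hAX, one_mul]
    exact ctrl_pow_mem A X hAX B (n - 2) j (by omega)
  have hwb : w ⬝ᵥ (fun i => B i 0) ≠ 0 := by
    intro h
    apply hw
    have hz := ctrl_ext A X hAX B hctrb (Matrix.of fun _ => w) (by
      intro j hj
      ext i
      change w ⬝ᵥ _ = 0
      cases j with
      | zero => simpa using h
      | succ j => exact hperp' j hj)
    exact congrFun hz ⟨0, by omega⟩
  refine ⟨hwb, ?_⟩
  set K : Matrix (Fin 1) (Fin n) ℝ := Matrix.of fun (_ : Fin 1) (j : Fin n) =>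
        (w ⬝ᵥ fun i => B i 0)⁻¹ * w j with hK
  have hBK : ∀ v, (B * K) *ᵥ v = ((w ⬝ᵥ fun i => B i 0)⁻¹ * (w ⬝ᵥ v)) • (fun i => B i 0) := by
    intro v
    rw [← Matrix.mulVec_mulVec]
    ext i
    simp [hK, Matrix.mulVec, dotProduct, Finset.mul_sum, Finset.sum_mul, mul_comm, mul_assoc,
      mul_left_comm]
  have hM0 : (A * (1 - B * K)) *ᵥ (fun i => B i 0) = 0 := by
    rw [← Matrix.mulVec_mulVec, Matrix.sub_mulVec, hBK, inv_mul_cancel₀ hwb]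
    simp
  have hMs : ∀ j, j + 1 < n → (A * (1 - B * K)) *ᵥ ((X ^ (j + 1)) *ᵥ (fun i => B i 0))
      = (X ^ j) *ᵥ (fun i => B i 0) := by
    intro j hj
    rw [← Matrix.mulVec_mulVec, Matrix.sub_mulVec, hBK, hperp' j hj, mul_zero, zero_smul,
      sub_zero, Matrix.one_mulVec, Matrix.mulVec_mulVec, pow_succ', ← mul_assoc, hAX, one_mul]
  have hpow : ∀ j, j < n →
      ((A * (1 - B * K)) ^ (j + 1)) *ᵥ ((X ^ j) *ᵥ (fun i => B i 0)) = 0 := by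
    intro j
    induction j with
    | zero => intro _; simpa using hM0
    | succ j ih =>
      intro hj
      rw [pow_succ, ← Matrix.mulVec_mulVec, hMs j hj]
      exact ih (by omega)
  have hnil : (A * (1 - B * K)) ^ n = 0 := by
    apply ctrl_ext A X hAX B hctrb
    intro j hj
    have : (A * (1 - B * K)) ^ n
        = (A * (1 - B * K)) ^ (n - (j + 1)) * (A * (1 - B * K)) ^ (j + 1) := by
      rw [← pow_add]
      congr 1
      omega
    rw [this, ← Matrix.mulVec_mulVec, hpow j hj, Matrix.mulVec_zero]
  refine ⟨hnil, ?_⟩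
  have hconj : ∀ m : ℕ, (A - B * (K * A)) ^ m = X * (A * (1 - B * K)) ^ m * A := by
    intro m
    have h1 : A - B * (K * A) = X * (A * (1 - B * K)) * A := by
      rw [← mul_assoc X, hXA, one_mul, Matrix.sub_mul, one_mul, Matrix.mul_assoc]
    induction m with
    | zero => simp [hXA]
    | succ m ih =>
      rw [pow_succ, ih, h1, pow_succ]
      calc _ = X * (A * (1 - B * K)) ^ m * (A * X) * (A * (1 - B * K)) * A := by
            simp only [mul_assoc]
        _ = _ := by rw [hAX]; simp only [mul_assoc, one_mul]
  rw [hconj, hnil]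
  simp
end
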